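/- arXiv:1303.5333 — 2 statements merged into one kernel-verified Lean document; each statement's English description precedes it below -/
import Mathlib

section
/- Let Z be a unique factorization domain, let n ≥ 2 be an integer, and let f ∈ Z[X] be irreducible in Z[X] of positive degree m with leading coefficient a. Then f(X^n) is NOT irreducible in Z[X] if and only if at least one of the following holds: (1) there exist a prime p dividing n, a unit u ∈ Zˣ such that u·a is a p-th power in Z, and polynomials S_0, …, S_{p−1} ∈ Z[X] such that (−1)^{m(p−1)}·u·f(X^p) = det M, where M is the p×p matrix over Z[X] whose (i, k) entry is X^{(k−i) mod p}·S_{(k−i) mod p}(X^p); or (2) 4 divides n and there exist a unit u ∈ Zˣ such that u·a is a square in Z and polynomials S_0, S_1 ∈ Z[X] with u·f(X^4) = S_0(X^2)^2 − X^2·S_1(X^2)^2. -/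
open Polynomial

/-!
Let `α` be a root of `f` over the fraction field `K` of `Z`. Capelli's lemma says that `f(X ^ n)` is
irreducible over `K` iff `X ^ n - α` is irreducible over `K(α)`, so by Gauss's lemma and the
Vahlen–Capelli theorem it suffices to treat `n` prime and `n = 4`; the latter is the case `n = 2`
for the polynomial `f(X ^ 2)`.

For a prime `p`, if `X ^ p - α` is reducible then `α = β ^ p` with `β ∈ K(α)`, and the minimal
polynomial of `β` yields a factor `g` of `f(X ^ p)` of degree at most `m`. The norm of `g` from
`Z[X]` to `Z[X ^ p]` divides a power of `f(X ^ p)`, which is prime in `Z[X ^ p]`, and comparing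
degrees shows that it is a unit multiple of `f(X ^ p)`. Writing `g = ∑ X ^ j * S_j(X ^ p)`,
this norm is the circulant determinant `det M`. Conversely `g` divides its norm; if that norm were
irreducible, `g` would be a polynomial in `X ^ p`, so its norm would be the `p`-th power `g ^ p`.
-/

universe u

section Field

variable {K : Type u} [Field K]

theorem irreducible_of_forall_natDegree_le {F : K[X]} (hF : 0 < F.natDegree)
    (h : ∀ q, Irreducible q → q ∣ F → F.natDegree ≤ q.natDegree) : Irreducible F := by
  have hF0 : F ≠ 0 := ne_zero_of_natDegree_gt hF
  obtain ⟨q, hq, hqF⟩ := WfDvdMonoid.exists_irreducible_factor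
    (fun hu ↦ hF.ne' (natDegree_eq_zero_of_isUnit hu)) hF0
  exact (associated_of_dvd_of_natDegree_le hqF hF0 (h q hq hqF)).irreducible hq

section Extension

variable {L : Type*} [Field L] [Algebra K L]

theorem natDegree_dvd_finrank_of_aeval_eq_zero [FiniteDimensional K L] {F : K[X]}
    (hF : Irreducible F) {x : L} (hx : aeval x F = 0) : F.natDegree ∣ Module.finrank K L := by
  have hlc : F.leadingCoeff⁻¹ ≠ 0 := inv_ne_zero (leadingCoeff_ne_zero.2 hF.ne_zero)
  rw [← natDegree_mul_C hlc, minpoly.eq_of_irreducible hF hx]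
  exact minpoly.degree_dvd (IsIntegral.of_finite K x)

theorem irreducible_map_sub_C_gen_of_comp (pb : PowerBasis K L) {g : K[X]}
    (hcomp : Irreducible ((minpoly K pb.gen).comp g)) :
    Irreducible (g.map (algebraMap K L) - C pb.gen) := by
  have := pb.finite
  have hdeg := hcomp.natDegree_pos
  rw [natDegree_comp, pb.natDegree_minpoly] at hdeg
  refine irreducible_of_forall_natDegree_le ?_ fun q hq hqdvd ↦ ?_
  · simpa using pos_of_mul_pos_right hdeg (Nat.zero_le _)
  have := Fact.mk hq
  have := (AdjoinRoot.powerBasis hq.ne_zero).finite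
  have := Module.Finite.trans (R := K) L (AdjoinRoot q)
  have hroot : aeval (AdjoinRoot.root q) g = algebraMap L _ pb.gen := by
    have := aeval_eq_zero_of_dvd_aeval_eq_zero hqdvd (AdjoinRoot.eval₂_root q)
    simpa [sub_eq_zero] using this
  have hle := Nat.le_of_dvd Module.finrank_pos <|
    natDegree_dvd_finrank_of_aeval_eq_zero hcomp (x := AdjoinRoot.root q) <| by
      rw [aeval_comp, hroot, aeval_algebraMap_apply, minpoly.aeval, map_zero]
  rw [natDegree_comp, pb.natDegree_minpoly, ← Module.finrank_mul_finrank K L, pb.finrank,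
    (AdjoinRoot.powerBasis hq.ne_zero).finrank, AdjoinRoot.powerBasis_dim] at hle
  rw [natDegree_sub_C, natDegree_map]
  exact Nat.le_of_mul_le_mul_left hle pb.dim_pos

theorem irreducible_comp_of_map_sub_C_gen (pb : PowerBasis K L) {g : K[X]}
    (hsub : Irreducible (g.map (algebraMap K L) - C pb.gen)) :
    Irreducible ((minpoly K pb.gen).comp g) := by
  have hdeg := hsub.natDegree_pos
  rw [natDegree_sub_C, natDegree_map] at hdeg
  refine irreducible_of_forall_natDegree_le ?_ fun q hq hqdvd ↦ ?_
  · rw [natDegree_comp, pb.natDegree_minpoly]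
    exact Nat.mul_pos pb.dim_pos hdeg
  have := Fact.mk hq
  have := (AdjoinRoot.powerBasis hq.ne_zero).finite
  have hroot : aeval (aeval (AdjoinRoot.root q) g) (minpoly K pb.gen) = 0 := by
    rw [← aeval_comp]
    exact aeval_eq_zero_of_dvd_aeval_eq_zero hqdvd (AdjoinRoot.eval₂_root q)
  let φ : L →ₐ[K] AdjoinRoot q := pb.lift _ hroot
  let : Algebra L (AdjoinRoot q) := φ.toRingHom.toAlgebra
  have : IsScalarTower K L (AdjoinRoot q) := .of_algHom φ
  have := Module.Finite.of_restrictScalars_finite K L (AdjoinRoot q)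
  have hle := Nat.le_of_dvd Module.finrank_pos <|
    natDegree_dvd_finrank_of_aeval_eq_zero hsub (x := AdjoinRoot.root q) <| by
      rw [map_sub, aeval_map_algebraMap, aeval_C, sub_eq_zero]
      exact (pb.lift_gen _ hroot).symm
  rw [natDegree_sub_C, natDegree_map] at hle
  rw [natDegree_comp, pb.natDegree_minpoly, ← AdjoinRoot.powerBasis_dim hq.ne_zero,
    ← (AdjoinRoot.powerBasis hq.ne_zero).finrank,
    ← Module.finrank_mul_finrank K L (AdjoinRoot q), pb.finrank]
  exact Nat.mul_le_mul_left _ hle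

theorem irreducible_minpoly_gen_comp_iff (pb : PowerBasis K L) {g : K[X]} :
    Irreducible ((minpoly K pb.gen).comp g) ↔
      Irreducible (g.map (algebraMap K L) - C pb.gen) :=
  ⟨irreducible_map_sub_C_gen_of_comp pb, irreducible_comp_of_map_sub_C_gen pb⟩

theorem irreducible_X_pow_mul_sub_C_iff (pb : PowerBasis K L) {a : K} {m : ℕ}
    (hgen : minpoly K pb.gen = X ^ m - C a) (n : ℕ) :
    Irreducible (X ^ (n * m) - C a) ↔ Irreducible (X ^ n - C pb.gen) := by
  simpa [hgen, pow_mul] using irreducible_minpoly_gen_comp_iff pb (g := X ^ n)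

end Extension

theorem irreducible_comp_iff {f : K[X]} (hf : Irreducible f) {g : K[X]} :
    Irreducible (f.comp g) ↔ Irreducible (g.map (AdjoinRoot.of f) - C (AdjoinRoot.root f)) := by
  have := Fact.mk hf
  have hlc : IsUnit (C f.leadingCoeff⁻¹) :=
    isUnit_C.2 (inv_ne_zero (leadingCoeff_ne_zero.2 hf.ne_zero)).isUnit
  have hcapelli := irreducible_minpoly_gen_comp_iff (AdjoinRoot.powerBasis hf.ne_zero) (g := g)
  rw [AdjoinRoot.minpoly_powerBasis_gen, mul_comp, C_comp,
    (associated_mul_unit_left _ _ hlc).irreducible_iff] at hcapelli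
  exact hcapelli

theorem irreducible_expand_iff_X_pow_sub_C {f : K[X]} (hf : Irreducible f) (n : ℕ) :
    Irreducible (expand K n f) ↔ Irreducible (X ^ n - C (AdjoinRoot.root f)) := by
  rw [expand_eq_comp_X_pow, irreducible_comp_iff hf, Polynomial.map_pow, map_X]

theorem irreducible_X_pow_mul_sub_C_of_coprime {a : K} {m n : ℕ} (hmn : m.Coprime n)
    (hm : Irreducible (X ^ m - C a)) (hn : Irreducible (X ^ n - C a)) :
    Irreducible (X ^ (m * n) - C a) := by
  have hm0 := hm.natDegree_pos
  have hn0 := hn.natDegree_pos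
  rw [natDegree_X_pow_sub_C] at hm0 hn0
  refine irreducible_of_forall_natDegree_le ?_ fun q hq hqdvd ↦ ?_
  · simpa using ⟨hm0, hn0⟩
  have := Fact.mk hq
  have := (AdjoinRoot.powerBasis hq.ne_zero).finite
  set z := AdjoinRoot.root q
  have hz : z ^ (m * n) = algebraMap K _ a := by
    have := aeval_eq_zero_of_dvd_aeval_eq_zero hqdvd (AdjoinRoot.eval₂_root q)
    simpa [sub_eq_zero] using this
  have hmdvd := natDegree_dvd_finrank_of_aeval_eq_zero hm (x := z ^ n) (by
    simp [← pow_mul, mul_comm n, hz])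
  have hndvd := natDegree_dvd_finrank_of_aeval_eq_zero hn (x := z ^ m) (by simp [← pow_mul, hz])
  rw [natDegree_X_pow_sub_C, (AdjoinRoot.powerBasis hq.ne_zero).finrank,
    AdjoinRoot.powerBasis_dim] at hmdvd hndvd
  rw [natDegree_X_pow_sub_C]
  exact Nat.le_of_dvd hq.natDegree_pos (hmn.mul_dvd_of_dvd_of_dvd hmdvd hndvd)

theorem norm_gen_of_minpoly_eq_X_sq_sub_C {L : Type*} [Field L] [Algebra K L]
    (pb : PowerBasis K L) {a : K} (hgen : minpoly K pb.gen = X ^ 2 - C a) :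
    Algebra.norm K pb.gen = -a := by
  have hdim : pb.dim = 2 := by rw [← pb.natDegree_minpoly, hgen, natDegree_X_pow_sub_C]
  rw [Algebra.PowerBasis.norm_gen_eq_coeff_zero_minpoly, hdim, hgen]
  simp

theorem sq_ne_gen_and_sq_ne_neg_gen {L : Type*} [Field L] [Algebra K L] (pb : PowerBasis K L)
    {a : K} (hgen : minpoly K pb.gen = X ^ 2 - C a) (h4 : Irreducible (X ^ 4 - C a)) (b : L) :
    b ^ 2 ≠ pb.gen ∧ b ^ 2 ≠ -pb.gen := by
  have hsq (c : L) : c ^ 2 ≠ pb.gen :=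
    (X_pow_sub_C_irreducible_iff_of_prime Nat.prime_two).1
      ((irreducible_X_pow_mul_sub_C_iff pb hgen 2).1 h4) c
  have hconj : aeval (-pb.gen) (minpoly K pb.gen) = 0 := by
    have hroot := minpoly.aeval K pb.gen
    rw [hgen] at hroot ⊢
    simpa using hroot
  -- The conjugation `gen ↦ -gen` turns a square root of `-gen` into one of `gen`.
  refine ⟨hsq b, fun hb ↦ hsq (pb.lift (-pb.gen) hconj b) ?_⟩
  rw [← map_pow, hb, map_neg, pb.lift_gen, neg_neg]

theorem irreducible_X_pow_four_sub_C_gen {L : Type*} [Field L] [Algebra K L]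
    (pb : PowerBasis K L) {a : K} (hgen : minpoly K pb.gen = X ^ 2 - C a)
    (h4 : Irreducible (X ^ 4 - C a)) : Irreducible (X ^ 4 - C pb.gen) := by
  have hsq := sq_ne_gen_and_sq_ne_neg_gen pb hgen h4
  have h2 : Irreducible (X ^ 2 - C pb.gen) :=
    X_pow_sub_C_irreducible_of_prime Nat.prime_two fun b ↦ (hsq b).1
  have := Fact.mk h2
  let pb' := AdjoinRoot.powerBasis h2.ne_zero
  have hgen' : minpoly L pb'.gen = X ^ 2 - C pb.gen :=
    AdjoinRoot.minpoly_powerBasis_gen_of_monic (monic_X_pow_sub_C _ two_ne_zero)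
  -- The norm of a square root of `pb'.gen` is a square root of `-pb.gen`.
  refine (irreducible_X_pow_mul_sub_C_iff pb' hgen' 2).2 <|
    X_pow_sub_C_irreducible_of_prime Nat.prime_two fun b hb ↦ (hsq (Algebra.norm L b)).2 ?_
  rw [← map_pow, hb, norm_gen_of_minpoly_eq_X_sq_sub_C pb' hgen']

theorem irreducible_X_pow_two_pow_sub_C (k : ℕ) {K : Type u} [Field K] {a : K}
    (h4 : Irreducible (X ^ 4 - C a)) : Irreducible (X ^ 2 ^ (k + 2) - C a) := by
  induction k generalizing K with
  | zero => simpa using h4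
  | succ k ih =>
    have h2 : Irreducible (X ^ 2 - C a) :=
      of_irreducible_expand two_ne_zero (by simpa [← pow_mul] using h4)
    have := Fact.mk h2
    let pb := AdjoinRoot.powerBasis h2.ne_zero
    have hgen : minpoly K pb.gen = X ^ 2 - C a :=
      AdjoinRoot.minpoly_powerBasis_gen_of_monic (monic_X_pow_sub_C _ two_ne_zero)
    rw [show 2 ^ (k + 1 + 2) = 2 ^ (k + 2) * 2 by ring, irreducible_X_pow_mul_sub_C_iff pb hgen]
    exact ih (irreducible_X_pow_four_sub_C_gen pb hgen h4)

theorem irreducible_X_pow_sub_C_of_forall_prime {a : K} {n : ℕ} (hn : n ≠ 0)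
    (hprime : ∀ p : ℕ, p.Prime → p ∣ n → Irreducible (X ^ p - C a))
    (hfour : 4 ∣ n → Irreducible (X ^ 4 - C a)) : Irreducible (X ^ n - C a) := by
  obtain ⟨k, r, hr, rfl⟩ := Nat.exists_eq_two_pow_mul_odd hn
  refine irreducible_X_pow_mul_sub_C_of_coprime (hr.coprime_two_left.pow_left k) ?_ ?_
  · match k with
    | 0 => simpa using irreducible_X_sub_C a
    | 1 => simpa using hprime 2 Nat.prime_two (by simp)
    | k + 2 =>
      refine irreducible_X_pow_two_pow_sub_C k (hfour (Dvd.dvd.mul_right ?_ r))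
      exact pow_dvd_pow 2 (Nat.le_add_left 2 k)
  · exact X_pow_sub_C_irreducible_of_odd hr fun p hp hpr ↦
      (X_pow_sub_C_irreducible_iff_of_prime hp).1 (hprime p hp (hpr.mul_left _))

theorem irreducible_expand_of_forall_prime {f : K[X]} (hf : Irreducible f) {n : ℕ} (hn : n ≠ 0)
    (hprime : ∀ p : ℕ, p.Prime → p ∣ n → Irreducible (expand K p f))
    (hfour : 4 ∣ n → Irreducible (expand K 4 f)) : Irreducible (expand K n f) := by
  have := Fact.mk hf
  simp only [irreducible_expand_iff_X_pow_sub_C hf] at hprime hfour ⊢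
  exact irreducible_X_pow_sub_C_of_forall_prime hn hprime hfour

theorem exists_irreducible_dvd_expand_natDegree_le {f : K[X]} (hf : Irreducible f) {p : ℕ}
    (hp : p.Prime) (hred : ¬ Irreducible (expand K p f)) :
    ∃ g, Irreducible g ∧ g ∣ expand K p f ∧ g.natDegree ≤ f.natDegree := by
  have := Fact.mk hf
  have := (AdjoinRoot.powerBasis hf.ne_zero).finite
  rw [irreducible_expand_iff_X_pow_sub_C hf, X_pow_sub_C_irreducible_iff_of_prime hp] at hred
  push Not at hred
  obtain ⟨b, hb⟩ := hred
  refine ⟨minpoly K b, minpoly.irreducible (.of_finite K b), minpoly.dvd K b ?_, ?_⟩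
  · rw [expand_aeval, hb, aeval_def]
    exact AdjoinRoot.eval₂_root f
  · rw [← AdjoinRoot.powerBasis_dim hf.ne_zero, ← PowerBasis.finrank]
    exact minpoly.natDegree_le b

end Field

section FractionField

theorem isPrimitive_expand {R : Type*} [CommSemiring R] {f : R[X]} (hf : f.IsPrimitive) {n : ℕ}
    (hn : n ≠ 0) : (expand R n f).IsPrimitive := by
  intro r hr
  refine hf r ((C_dvd_iff_dvd_coeff r f).2 fun i ↦ ?_)
  rw [← coeff_expand_mul (Nat.pos_of_ne_zero hn)]
  exact (C_dvd_iff_dvd_coeff _ _).1 hr _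

theorem prime_of_irreducible_of_natDegree_ne_zero {R : Type*} [CommRing R] [IsDomain R]
    [IsGCDMonoid R] {f : R[X]} (hf : Irreducible f) (hdeg : f.natDegree ≠ 0) : Prime f := by
  let K := FractionRing R
  have hprim := hf.isPrimitive hdeg
  have hfK : Prime (f.map (algebraMap R K)) :=
    ((hprim.irreducible_iff_irreducible_map_fraction_map (K := K)).1 hf).prime
  refine ⟨hf.ne_zero, hf.not_isUnit, fun a b hab ↦ ?_⟩
  simp only [hprim.dvd_iff_fraction_map_dvd_fraction_map K, Polynomial.map_mul] at hab ⊢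
  exact hfK.dvd_or_dvd hab

variable {R : Type*} (K : Type*) [CommRing R] [IsDomain R] [Field K] [Algebra R K]
  [IsFractionRing R K]

theorem irreducible_expand_iff_map [IsGCDMonoid R] {f : R[X]} (hf : f.IsPrimitive) {n : ℕ}
    (hn : n ≠ 0) :
    Irreducible (expand R n f) ↔ Irreducible (expand K n (f.map (algebraMap R K))) := by
  rw [(isPrimitive_expand hf hn).irreducible_iff_irreducible_map_fraction_map (K := K), map_expand]

theorem exists_dvd_natDegree_eq_of_dvd_map [IsGCDMonoid R] {F : R[X]} {g : K[X]}
    (hgF : g ∣ F.map (algebraMap R K)) : ∃ G : R[X], G ∣ F ∧ G.natDegree = g.natDegree := by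
  let : NormalizedGCDMonoid R := Nonempty.some inferInstance
  obtain ⟨b, hb, hbg⟩ := IsLocalization.integerNormalization_spec (nonZeroDivisors R) g
  set N := IsLocalization.integerNormalization (nonZeroDivisors R) g
  rw [Algebra.smul_def, IsScalarTower.algebraMap_apply R K, algebraMap_eq] at hbg
  have hb0 : algebraMap R K b ≠ 0 :=
    IsLocalization.to_map_ne_zero_of_mem_nonZeroDivisors K le_rfl hb
  have hNg : N.map (algebraMap R K) ∣ g := by
    rw [hbg]
    exact (associated_unit_mul_left g _ (isUnit_C.2 hb0.isUnit)).dvd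
  refine ⟨N.primPart, N.isPrimitive_primPart.dvd_of_fraction_map_dvd_fraction_map (K := K) ?_, ?_⟩
  · exact ((Polynomial.map_dvd _ N.primPart_dvd).trans hNg).trans hgF
  · rw [natDegree_primPart, ← natDegree_map_eq_of_injective (IsFractionRing.injective R K), hbg,
      natDegree_C_mul hb0]

end FractionField

section PolynomialMatrix

variable {R n : Type*} [CommRing R] [Fintype n] [DecidableEq n]

theorem natDegree_det_le_of_forall_natDegree_le {M : Matrix n n R[X]} {d : ℕ}
    (hM : ∀ i j, (M i j).natDegree ≤ d) : M.det.natDegree ≤ Fintype.card n * d := by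
  rw [Matrix.det_apply]
  refine natDegree_sum_le_of_forall_le _ _ fun σ _ ↦ ?_
  rw [Units.smul_def]
  refine (natDegree_smul_le _ _).trans <| (natDegree_prod_le _ _).trans ?_
  exact (Finset.sum_le_card_nsmul _ _ d fun i _ ↦ hM _ _).trans_eq (by simp)

theorem coeff_det_of_forall_natDegree_le {M : Matrix n n R[X]} {d : ℕ}
    (hM : ∀ i j, (M i j).natDegree ≤ d) :
    M.det.coeff (Fintype.card n * d) = (M.map (coeff · d)).det := by
  simp only [Matrix.det_apply', finsetSum_coeff, ← C_eq_intCast, coeff_C_mul, Matrix.map_apply]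
  refine Finset.sum_congr rfl fun σ _ ↦ ?_
  rw [← Finset.card_univ, coeff_prod_of_natDegree_le _ _ _ fun i _ ↦ hM _ _]

theorem dvd_det_mul_of_mulVec_eq_smul {M : Matrix n n R} {v : n → R} {r : R}
    (h : M.mulVec v = r • v) (i : n) : r ∣ M.det * v i := by
  refine ⟨M.adjugate.mulVec v i, ?_⟩
  have := congrArg M.adjugate.mulVec h
  rw [Matrix.mulVec_mulVec, Matrix.adjugate_mul, Matrix.mulVec_smul, Matrix.smul_mulVec,
    Matrix.one_mulVec] at this
  simpa using congrFun this i

end PolynomialMatrix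

section TwistedCirculant

variable {R : Type*} [CommRing R] {p : ℕ}

/-- The circulant matrix of the vector whose `j`-th entry is `X ^ j * S_j(X ^ p)`: the
matrix `M` of the criterion. -/
noncomputable def twistedCirculant (S : Fin p → R[X]) : Matrix (Fin p) (Fin p) R[X] :=
  Matrix.of fun i k ↦ X ^ ((k - i : Fin p) : ℕ) * expand R p (S (k - i))

theorem dvd_sum_val_perm_sub (σ : Equiv.Perm (Fin p)) : p ∣ ∑ i, ((σ i - i : Fin p) : ℕ) := by
  rw [← Int.natCast_dvd_natCast, Nat.cast_sum]
  simp only [Fin.intCast_val_sub_eq_sub_add_ite, Finset.sum_add_distrib, Finset.sum_sub_distrib,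
    Equiv.sum_comp σ fun i ↦ ((i : ℕ) : ℤ), sub_self, zero_add]
  exact Finset.dvd_sum fun i _ ↦ by split_ifs <;> simp

theorem det_twistedCirculant_mem_range_expand (S : Fin p → R[X]) :
    (twistedCirculant S).det ∈ (expand R p).range := by
  rw [← Matrix.det_transpose, Matrix.det_apply]
  refine sum_mem fun σ _ ↦ zsmul_mem ?_ _
  simp only [twistedCirculant, Matrix.transpose_apply, Matrix.of_apply, Finset.prod_mul_distrib,
    Finset.prod_pow_eq_pow_sum]
  obtain ⟨c, hc⟩ := dvd_sum_val_perm_sub σ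
  exact mul_mem ⟨X ^ c, by simp [hc, pow_mul]⟩ (prod_mem fun i _ ↦ ⟨S (σ i - i), rfl⟩)

theorem det_twistedCirculant_two (S : Fin 2 → R[X]) :
    (twistedCirculant S).det = expand R 2 (S 0) ^ 2 - X ^ 2 * expand R 2 (S 1) ^ 2 := by
  have hneg : (-1 : Fin 2) = 1 := rfl
  simp only [twistedCirculant, Matrix.det_fin_two, Matrix.of_apply, sub_self, sub_zero, zero_sub,
    hneg, Fin.val_zero, Fin.val_one]
  ring

end TwistedCirculant

section CyclicNorm

/-- The permutation matrix of the cycle `i ↦ i + 1`, whose powers span the circulant matrices. -/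
def cyclicShift (R : Type*) [CommRing R] (p : ℕ) [NeZero p] : Matrix (Fin p) (Fin p) R :=
  (Equiv.addRight (1 : Fin p)).permMatrix R

variable {R : Type*} [CommRing R] {p : ℕ} [NeZero p]

theorem cyclicShift_pow_apply (d : ℕ) (i k : Fin p) :
    (cyclicShift R p ^ d) i k = if i + Fin.ofNat p d = k then 1 else 0 := by
  induction d generalizing i with
  | zero => simp [Matrix.one_apply]
  | succ d ih =>
    have hadd : Fin.ofNat p (d + 1) = 1 + Fin.ofNat p d := by
      ext
      simp [Fin.val_add, add_comm]
    rw [pow_succ', cyclicShift, PEquiv.toMatrix_toPEquiv_mul, ← cyclicShift]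
    simp only [Matrix.submatrix_apply, id, Equiv.coe_addRight, ih, hadd, add_assoc]

theorem cyclicShift_pow_self : cyclicShift R p ^ p = 1 := by
  ext i k
  simp [cyclicShift_pow_apply, Matrix.one_apply]

theorem det_cyclicShift : (cyclicShift R p).det = (-1) ^ (p - 1) := by
  obtain ⟨q, rfl⟩ := Nat.exists_eq_succ_of_ne_zero (NeZero.ne p)
  have hrotate : Equiv.addRight (1 : Fin (q + 1)) = finRotate (q + 1) := by
    ext i
    simp
  simp [cyclicShift, hrotate, Matrix.det_permutation, sign_finRotate]

/-- The circulant model of multiplication on `R[X]` over `R[X ^ p]`: the variable acts as `X` times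
the cyclic shift. Over `R[X, X⁻¹]` this is the regular representation, in the basis
`1, X, …, X ^ (p - 1)` with each element rescaled to degree zero. -/
noncomputable def cyclicRep (R : Type*) [CommRing R] (p : ℕ) [NeZero p] :
    R[X] →ₐ[R] Matrix (Fin p) (Fin p) R[X] :=
  aeval ((X : R[X]) • cyclicShift R[X] p)

/-- The norm of `R[X]` over `R[X ^ p]`, defined as the determinant of `cyclicRep`. -/
noncomputable def cyclicNorm (R : Type*) [CommRing R] (p : ℕ) [NeZero p] : R[X] →* R[X] :=
  Matrix.detMonoidHom.comp (cyclicRep R p : R[X] →* Matrix (Fin p) (Fin p) R[X])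

theorem cyclicNorm_apply (g : R[X]) : cyclicNorm R p g = (cyclicRep R p g).det := rfl

theorem cyclicRep_X_pow (d : ℕ) :
    cyclicRep R p (X ^ d) = (X ^ d : R[X]) • cyclicShift R[X] p ^ d := by
  rw [cyclicRep, map_pow, aeval_X, _root_.smul_pow]

theorem coeff_cyclicRep (g : R[X]) (i k : Fin p) (d : ℕ) :
    (cyclicRep R p g i k).coeff d = if i + Fin.ofNat p d = k then g.coeff d else 0 := by
  induction g using Polynomial.induction_on' with
  | add f g hf hg => simp only [map_add, Matrix.add_apply, coeff_add, hf, hg]; split_ifs <;> simp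
  | monomial e a =>
    rw [← C_mul_X_pow_eq_monomial, ← smul_eq_C_mul, map_smul, cyclicRep_X_pow]
    simp only [Matrix.smul_apply, cyclicShift_pow_apply, coeff_smul, smul_eq_mul, coeff_X_pow]
    rcases eq_or_ne d e with rfl | hde
    · rw [if_pos rfl]
      split_ifs <;> simp
    · split_ifs <;> simp [coeff_X_pow, hde]

theorem cyclicRep_expand (g : R[X]) :
    cyclicRep R p (expand R p g) = Matrix.scalar (Fin p) (expand R p g) := by
  have hhom : (cyclicRep R p).comp (expand R p) =
      ((Algebra.ofId R[X] (Matrix (Fin p) (Fin p) R[X])).restrictScalars R).comp (expand R p) := by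
    ext1
    simp only [AlgHom.comp_apply, expand_X, cyclicRep_X_pow, cyclicShift_pow_self]
    exact (Algebra.algebraMap_eq_smul_one _).symm
  exact DFunLike.congr_fun hhom g

theorem cyclicNorm_expand (g : R[X]) : cyclicNorm R p (expand R p g) = expand R p g ^ p := by
  simp [cyclicNorm_apply, cyclicRep_expand]

theorem cyclicRep_mulVec_one (g : R[X]) : (cyclicRep R p g).mulVec 1 = g • 1 := by
  have hX : (cyclicRep R p X).mulVec 1 = (X : R[X]) • 1 := by
    rw [cyclicRep, aeval_X, Matrix.smul_mulVec, cyclicShift, Matrix.permMatrix_mulVec]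
    rfl
  induction g using Polynomial.induction_on with
  | C a =>
    rw [← algebraMap_eq, AlgHom.commutes]
    ext i : 1
    simp [Matrix.mulVec, Matrix.algebraMap_matrix_apply, dotProduct]
  | add f g hf hg => rw [map_add, Matrix.add_mulVec, hf, hg, add_smul]
  | monomial d a ih =>
    rw [pow_succ, ← mul_assoc, map_mul, ← Matrix.mulVec_mulVec, hX, Matrix.mulVec_smul, ih,
      smul_smul, mul_comm X]

theorem dvd_cyclicNorm (g : R[X]) : g ∣ cyclicNorm R p g := by
  simpa [cyclicNorm_apply] using dvd_det_mul_of_mulVec_eq_smul (cyclicRep_mulVec_one g) (0 : Fin p)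

theorem natDegree_cyclicRep_le (g : R[X]) (i k : Fin p) :
    (cyclicRep R p g i k).natDegree ≤ g.natDegree :=
  natDegree_le_iff_coeff_eq_zero.2 fun d hd ↦ by
    rw [coeff_cyclicRep, coeff_eq_zero_of_natDegree_lt hd, ite_self]

theorem natDegree_cyclicNorm_le (g : R[X]) :
    (cyclicNorm R p g).natDegree ≤ p * g.natDegree := by
  simpa [cyclicNorm_apply] using
    natDegree_det_le_of_forall_natDegree_le (natDegree_cyclicRep_le (p := p) g)

theorem coeff_cyclicNorm (g : R[X]) : (cyclicNorm R p g).coeff (p * g.natDegree) =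
    (-1) ^ (g.natDegree * (p - 1)) * g.leadingCoeff ^ p := by
  have htop : (cyclicRep R p g).map (coeff · g.natDegree) =
      g.leadingCoeff • cyclicShift R p ^ g.natDegree := by
    ext i k
    simp [coeff_cyclicRep, cyclicShift_pow_apply]
  have hcoeff := coeff_det_of_forall_natDegree_le (natDegree_cyclicRep_le (p := p) g)
  rw [htop, Matrix.det_smul, Matrix.det_pow, det_cyclicShift, Fintype.card_fin] at hcoeff
  rw [cyclicNorm_apply, hcoeff]
  ring

theorem exists_eq_sum_X_pow_mul_expand (p : ℕ) [NeZero p] (g : R[X]) :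
    ∃ S : Fin p → R[X], g = ∑ j : Fin p, X ^ (j : ℕ) * expand R p (S j) := by
  induction g using Polynomial.induction_on' with
  | add f g hf hg =>
    obtain ⟨S, rfl⟩ := hf
    obtain ⟨T, rfl⟩ := hg
    exact ⟨S + T, by simp [mul_add, Finset.sum_add_distrib]⟩
  | monomial d a =>
    refine ⟨Pi.single (Fin.ofNat p d) (monomial (d / p) a), ?_⟩
    have hzero (j : Fin p) (hj : j ≠ Fin.ofNat p d) :
        X ^ (j : ℕ) * expand R p
          ((Pi.single (Fin.ofNat p d) (monomial (d / p) a) : Fin p → R[X]) j) = 0 := by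
      rw [Pi.single_eq_of_ne hj, map_zero, mul_zero]
    rw [Finset.sum_eq_single (Fin.ofNat p d) (fun j _ ↦ hzero j) (by simp),
      Pi.single_eq_same, expand_monomial, X_pow_mul_monomial, Fin.val_ofNat, Nat.div_add_mod']

theorem cyclicRep_sum_X_pow_mul_expand (S : Fin p → R[X]) :
    cyclicRep R p (∑ j : Fin p, X ^ (j : ℕ) * expand R p (S j)) = twistedCirculant S := by
  ext1 i k
  have hshift (j : Fin p) : i + j = k ↔ j = k - i := by rw [eq_sub_iff_add_eq, add_comm]
  simp [cyclicRep_X_pow, cyclicRep_expand, Matrix.sum_apply, cyclicShift_pow_apply, hshift,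
    twistedCirculant]

theorem exists_cyclicNorm_eq_det_twistedCirculant (g : R[X]) :
    ∃ S : Fin p → R[X], cyclicNorm R p g = (twistedCirculant S).det := by
  obtain ⟨S, hS⟩ := exists_eq_sum_X_pow_mul_expand p g
  exact ⟨S, by rw [hS, cyclicNorm_apply, cyclicRep_sum_X_pow_mul_expand]⟩

theorem exists_cyclicNorm_eq_expand (g : R[X]) : ∃ h, cyclicNorm R p g = expand R p h := by
  obtain ⟨S, hS⟩ := exists_cyclicNorm_eq_det_twistedCirculant (p := p) g
  obtain ⟨h, hh⟩ := det_twistedCirculant_mem_range_expand S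
  exact ⟨h, hS.trans hh.symm⟩

section IsDomain

variable [IsDomain R]

theorem natDegree_cyclicNorm (g : R[X]) : (cyclicNorm R p g).natDegree = p * g.natDegree := by
  rcases eq_or_ne g 0 with rfl | hg
  · simpa using natDegree_cyclicNorm_le (p := p) (0 : R[X])
  refine (natDegree_cyclicNorm_le g).antisymm (le_natDegree_of_ne_zero ?_)
  simp [coeff_cyclicNorm, hg]

theorem leadingCoeff_cyclicNorm (g : R[X]) :
    (cyclicNorm R p g).leadingCoeff = (-1) ^ (g.natDegree * (p - 1)) * g.leadingCoeff ^ p := by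
  rw [leadingCoeff, natDegree_cyclicNorm, coeff_cyclicNorm]

theorem not_irreducible_expand_of_associated_cyclicNorm (hp : p ≠ 1) {f g : R[X]}
    (h : Associated (cyclicNorm R p g) (expand R p f)) : ¬ Irreducible (expand R p f) := by
  intro hirr
  obtain ⟨q, hq⟩ : ∃ q, g = expand R p q := by
    rcases hirr.dvd_iff.1 ((dvd_cyclicNorm g).trans h.dvd) with hunit | hassoc
    · obtain ⟨c, -, rfl⟩ := Polynomial.isUnit_iff.1 hunit
      exact ⟨C c, (expand_C p c).symm⟩
    · obtain ⟨w, rfl⟩ := hassoc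
      obtain ⟨c, -, hc⟩ := Polynomial.isUnit_iff.1 w.isUnit
      exact ⟨f * C c, by rw [map_mul, expand_C, hc]⟩
  rw [hq, cyclicNorm_expand] at h
  exact not_irreducible_pow hp (h.symm.irreducible hirr)

theorem exists_associated_cyclicNorm_expand_pow {f g : R[X]} (hf : Prime f)
    (hg : g ∣ expand R p f) : ∃ j, Associated (cyclicNorm R p g) (expand R p f ^ j) := by
  obtain ⟨k, hk⟩ := hg
  obtain ⟨h, hh⟩ := exists_cyclicNorm_eq_expand (p := p) g
  obtain ⟨h', hh'⟩ := exists_cyclicNorm_eq_expand (p := p) k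
  have hdvd : h ∣ f ^ p := by
    refine ⟨h', expand_injective (NeZero.pos p) ?_⟩
    rw [map_mul, ← hh, ← hh', ← map_mul, ← hk, cyclicNorm_expand, map_pow]
  obtain ⟨j, -, hj⟩ := (dvd_prime_pow hf p).1 hdvd
  refine ⟨j, ?_⟩
  rw [hh, ← map_pow]
  exact hj.map (expand R p)

theorem associated_cyclicNorm_expand {f g : R[X]} (hf : Prime f) (hg : g ∣ expand R p f)
    (hg0 : g.natDegree ≠ 0) (hgf : g.natDegree ≤ f.natDegree) :
    Associated (cyclicNorm R p g) (expand R p f) := by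
  obtain ⟨j, hj⟩ := exists_associated_cyclicNorm_expand_pow hf hg
  have hdeg : g.natDegree = j * f.natDegree := by
    have := natDegree_eq_of_degree_eq (degree_eq_degree_of_associated hj)
    rw [natDegree_cyclicNorm, natDegree_pow, natDegree_expand, ← mul_assoc, mul_comm] at this
    exact Nat.eq_of_mul_eq_mul_right (NeZero.pos p) this
  obtain rfl : j = 1 := by
    have hj0 : j ≠ 0 := by
      rintro rfl
      exact hg0 (by simpa using hdeg)
    have hj1 : j * f.natDegree ≤ 1 * f.natDegree := by rwa [one_mul, ← hdeg]
    have := Nat.le_of_mul_le_mul_right hj1 ((Nat.pos_of_ne_zero hg0).trans_le hgf)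
    lia
  rwa [pow_one] at hj

theorem exists_unit_of_associated_cyclicNorm {f g : R[X]}
    (h : Associated (cyclicNorm R p g) (expand R p f)) :
    ∃ u : Rˣ, u * f.leadingCoeff = g.leadingCoeff ^ p ∧
      C ((-1) ^ (f.natDegree * (p - 1)) * (u : R)) * expand R p f = cyclicNorm R p g := by
  have hdeg : g.natDegree = f.natDegree := by
    have := natDegree_eq_of_degree_eq (degree_eq_degree_of_associated h)
    rw [natDegree_cyclicNorm, natDegree_expand, mul_comm] at this
    exact Nat.eq_of_mul_eq_mul_right (NeZero.pos p) this
  obtain ⟨w, hw⟩ := h.symm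
  obtain ⟨_, ⟨v, rfl⟩, hv⟩ := Polynomial.isUnit_iff.1 w.isUnit
  rw [← hv, mul_comm] at hw
  have hsign : ((-1 : R) ^ (f.natDegree * (p - 1))) * (-1) ^ (f.natDegree * (p - 1)) = 1 := by
    rw [← mul_pow, neg_one_mul, neg_neg, one_pow]
  have hlead := congrArg leadingCoeff hw
  rw [leadingCoeff_cyclicNorm, leadingCoeff_mul, leadingCoeff_C, leadingCoeff_expand (NeZero.pos p),
    hdeg] at hlead
  refine ⟨(-1) ^ (f.natDegree * (p - 1)) * v, ?_, ?_⟩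
  · push_cast
    rw [mul_assoc, hlead, ← mul_assoc, hsign, one_mul]
  · push_cast
    rw [← mul_assoc, hsign, one_mul, hw]

theorem not_irreducible_expand_of_unit_mul_eq_det (hp : p ≠ 1) {f : R[X]} {v : R} (hv : IsUnit v)
    {S : Fin p → R[X]} (hS : C v * expand R p f = (twistedCirculant S).det) :
    ¬ Irreducible (expand R p f) := by
  rw [← cyclicRep_sum_X_pow_mul_expand, ← cyclicNorm_apply] at hS
  refine not_irreducible_expand_of_associated_cyclicNorm
    (g := ∑ j : Fin p, X ^ (j : ℕ) * expand R p (S j)) hp ?_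
  rw [← hS]
  exact associated_unit_mul_left _ _ (isUnit_C.2 hv)

theorem not_irreducible_expand_four_of_eq {f S₀ S₁ : R[X]} {v : R} (hv : IsUnit v)
    (h : C v * expand R 4 f = expand R 2 S₀ ^ 2 - X ^ 2 * expand R 2 S₁ ^ 2) :
    ¬ Irreducible (expand R 4 f) := by
  rw [show (4 : ℕ) = 2 * 2 from rfl, ← expand_expand] at h ⊢
  refine not_irreducible_expand_of_unit_mul_eq_det (by decide) hv (S := ![S₀, S₁]) ?_
  simpa [det_twistedCirculant_two] using h

end IsDomain

end CyclicNorm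

section GCDDomain

variable {R : Type*} [CommRing R] [IsDomain R] [IsGCDMonoid R] {f : R[X]}

theorem irreducible_expand_iff_forall_prime (hf : Irreducible f) (hdeg : f.natDegree ≠ 0) {n : ℕ}
    (hn : n ≠ 0) :
    Irreducible (expand R n f) ↔
      (∀ p : ℕ, p.Prime → p ∣ n → Irreducible (expand R p f)) ∧
        (4 ∣ n → Irreducible (expand R 4 f)) := by
  have hprim := hf.isPrimitive hdeg
  refine ⟨fun h ↦ ?_, fun ⟨hprime, hfour⟩ ↦ ?_⟩
  · have hdvd {k : ℕ} (hk : k ∣ n) : Irreducible (expand R k f) := by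
      obtain ⟨r, rfl⟩ := hk
      rw [mul_comm, ← expand_expand] at h
      exact of_irreducible_expand (right_ne_zero_of_mul hn) h
    exact ⟨fun p _ ↦ hdvd, hdvd⟩
  · let K := FractionRing R
    rw [irreducible_expand_iff_map K hprim hn]
    refine irreducible_expand_of_forall_prime
      ((hprim.irreducible_iff_irreducible_map_fraction_map (K := K)).1 hf) hn
      (fun p hp hpn ↦ ?_) fun h4 ↦ ?_
    · exact (irreducible_expand_iff_map K hprim hp.ne_zero).1 (hprime p hp hpn)
    · exact (irreducible_expand_iff_map K hprim four_ne_zero).1 (hfour h4)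

theorem exists_dvd_expand_natDegree_le (hf : Irreducible f) (hdeg : f.natDegree ≠ 0) {p : ℕ}
    (hp : p.Prime) (hred : ¬ Irreducible (expand R p f)) :
    ∃ g, g ∣ expand R p f ∧ g.natDegree ≠ 0 ∧ g.natDegree ≤ f.natDegree := by
  let K := FractionRing R
  have hprim := hf.isPrimitive hdeg
  rw [irreducible_expand_iff_map K hprim hp.ne_zero] at hred
  obtain ⟨g, hg, hgdvd, hgdeg⟩ := exists_irreducible_dvd_expand_natDegree_le
    ((hprim.irreducible_iff_irreducible_map_fraction_map (K := K)).1 hf) hp hred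
  rw [← map_expand] at hgdvd
  obtain ⟨G, hG, hGdeg⟩ := exists_dvd_natDegree_eq_of_dvd_map K hgdvd
  rw [natDegree_map_eq_of_injective (IsFractionRing.injective R K)] at hgdeg
  exact ⟨G, hG, hGdeg ▸ hg.natDegree_pos.ne', hGdeg ▸ hgdeg⟩

theorem not_irreducible_expand_prime_iff (hf : Irreducible f) (hdeg : f.natDegree ≠ 0) {p : ℕ}
    (hp : p.Prime) :
    ¬ Irreducible (expand R p f) ↔
      ∃ u : Rˣ, (∃ c, u * f.leadingCoeff = c ^ p) ∧ ∃ S : Fin p → R[X],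
        C ((-1) ^ (f.natDegree * (p - 1)) * (u : R)) * expand R p f =
          (twistedCirculant S).det := by
  have : NeZero p := ⟨hp.ne_zero⟩
  refine ⟨fun hred ↦ ?_, fun ⟨u, _, S, hS⟩ ↦ ?_⟩
  · obtain ⟨g, hg, hg0, hgf⟩ := exists_dvd_expand_natDegree_le hf hdeg hp hred
    have hassoc := associated_cyclicNorm_expand
      (prime_of_irreducible_of_natDegree_ne_zero hf hdeg) hg hg0 hgf
    obtain ⟨u, hlead, hnorm⟩ := exists_unit_of_associated_cyclicNorm hassoc
    obtain ⟨S, hS⟩ := exists_cyclicNorm_eq_det_twistedCirculant (p := p) g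
    exact ⟨u, ⟨_, hlead⟩, S, hnorm.trans hS⟩
  · exact not_irreducible_expand_of_unit_mul_eq_det hp.ne_one
      ((isUnit_one.neg.pow _).mul u.isUnit) hS

theorem exists_expand_four_eq_of_not_irreducible (h2 : Irreducible (expand R 2 f))
    (hdeg : f.natDegree ≠ 0) (hred : ¬ Irreducible (expand R 4 f)) :
    ∃ u : Rˣ, (∃ c, u * f.leadingCoeff = c ^ 2) ∧ ∃ S₀ S₁ : R[X],
      C (u : R) * expand R 4 f = expand R 2 S₀ ^ 2 - X ^ 2 * expand R 2 S₁ ^ 2 := by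
  have hdeg2 : (expand R 2 f).natDegree ≠ 0 := by simpa [natDegree_expand] using hdeg
  rw [show (4 : ℕ) = 2 * 2 from rfl, ← expand_expand] at hred ⊢
  obtain ⟨u, hlead, S, hS⟩ := (not_irreducible_expand_prime_iff h2 hdeg2 Nat.prime_two).1 hred
  rw [leadingCoeff_expand two_pos] at hlead
  refine ⟨u, hlead, S 0, S 1, ?_⟩
  rwa [natDegree_expand, Even.neg_one_pow (by simp), one_mul, det_twistedCirculant_two] at hS

end GCDDomain

theorem stmt4_general {Z : Type*} [CommRing Z] [IsDomain Z] [IsGCDMonoid Z]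
    (n : ℕ) (hn : n ≠ 0) (f : Polynomial Z) (hf : Irreducible f) (hdeg : 0 < f.natDegree) :
    ¬ Irreducible (f.comp (X ^ n)) ↔
      ((∃ p : ℕ, p.Prime ∧ p ∣ n ∧ ∃ u : Zˣ,
          (∃ c : Z, (u : Z) * f.leadingCoeff = c ^ p) ∧
          ∃ S : Fin p → Polynomial Z,
            C ((-1 : Z) ^ (f.natDegree * (p - 1)) * (u : Z)) * f.comp (X ^ p) =
              Matrix.det (Matrix.of fun i k : Fin p =>
                X ^ ((k - i : Fin p) : ℕ) * (S (k - i)).comp (X ^ p))) ∨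
        (4 ∣ n ∧ ∃ u : Zˣ,
          (∃ c : Z, (u : Z) * f.leadingCoeff = c ^ 2) ∧
          ∃ S₀ S₁ : Polynomial Z,
            C ((u : Z)) * f.comp (X ^ 4) =
              (S₀.comp (X ^ 2)) ^ 2 - X ^ 2 * (S₁.comp (X ^ 2)) ^ 2)) := by
  simp only [← expand_eq_comp_X_pow]
  have hprime {p : ℕ} (hp : p.Prime) := not_irreducible_expand_prime_iff hf hdeg.ne' hp
  rw [irreducible_expand_iff_forall_prime hf hdeg.ne' hn]
  constructor
  · intro hred
    by_cases hall : ∀ p : ℕ, p.Prime → p ∣ n → Irreducible (expand Z p f)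
    · obtain ⟨h4, hred4⟩ : 4 ∣ n ∧ ¬ Irreducible (expand Z 4 f) :=
        Classical.not_imp.1 (not_and.1 hred hall)
      have hirr2 := hall 2 Nat.prime_two (Dvd.dvd.trans (by decide) h4)
      exact .inr ⟨h4, exists_expand_four_eq_of_not_irreducible hirr2 hdeg.ne' hred4⟩
    · push Not at hall
      obtain ⟨p, hp, hpn, hredp⟩ := hall
      exact .inl ⟨p, hp, hpn, (hprime hp).1 hredp⟩
  · rintro (⟨p, hp, hpn, hdet⟩ | ⟨h4, u, -, S₀, S₁, hS⟩) ⟨hirr, hirr4⟩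
    · exact (hprime hp).2 hdet (hirr p hp hpn)
    · exact not_irreducible_expand_four_of_eq u.isUnit hS (hirr4 h4)

theorem stmt4 {Z : Type*} [CommRing Z] [IsDomain Z] [UniqueFactorizationMonoid Z]
    (n : ℕ) (hn : 2 ≤ n) (f : Polynomial Z) (hf : Irreducible f) (hdeg : 0 < f.natDegree) :
    ¬ Irreducible (f.comp (X ^ n)) ↔
      ((∃ p : ℕ, p.Prime ∧ p ∣ n ∧ ∃ u : Zˣ,
          (∃ c : Z, (u : Z) * f.leadingCoeff = c ^ p) ∧
          ∃ S : Fin p → Polynomial Z,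
            C ((-1 : Z) ^ (f.natDegree * (p - 1)) * (u : Z)) * f.comp (X ^ p) =
              Matrix.det (Matrix.of fun i k : Fin p =>
                X ^ ((k - i : Fin p) : ℕ) * (S (k - i)).comp (X ^ p))) ∨
        (4 ∣ n ∧ ∃ u : Zˣ,
          (∃ c : Z, (u : Z) * f.leadingCoeff = c ^ 2) ∧
          ∃ S₀ S₁ : Polynomial Z,
            C ((u : Z)) * f.comp (X ^ 4) =
              (S₀.comp (X ^ 2)) ^ 2 - X ^ 2 * (S₁.comp (X ^ 2)) ^ 2)) :=
  stmt4_general n (by lia) f hf hdeg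
end

section
/- Let Z be a unique factorization domain of characteristic p, where p is a prime number, let f ∈ Z[X] be irreducible in Z[X] of positive degree, and let s ≥ 1 be an integer. Then f(X^{p^s}) is not irreducible in Z[X] if and only if there exists a unit u ∈ Zˣ such that every coefficient of u·f is a p-th power in Z. -/
open Polynomial

/-!
Write `q = p ^ s` and `F = f(X ^ q)`. Raising to the `q`-th power is `expand` by `q` after the
`q`-Frobenius on coefficients, so a factorization `F = g * h` descends to a factorization of
`f ^ q`; as `f` is prime, `g ^ q` is associated to `F ^ i` for some `0 < i < q`. Since `Z[X]` is
integrally closed, Bézout turns this into `F ~ r ^ (q / gcd q i)` for some `r`, so `F` is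
associated to a `p`-th power. Undoing `expand`, this is equivalent to the coefficients of `f` being
`p`-th powers up to a common unit.
-/

section IntegrallyClosed

variable {R : Type*} [CommRing R] [IsDomain R] [IsIntegrallyClosed R] {a b : R} {m n : ℕ}

lemma exists_associated_pow_of_coprime (hm : m ≠ 0) (hmn : m.Coprime n)
    (h : Associated (a ^ m) (b ^ n)) : ∃ r, Associated (r ^ m) b := by
  obtain rfl | hb := eq_or_ne b 0
  · exact ⟨0, by rw [zero_pow hm]⟩
  obtain rfl | hm1 := eq_or_ne m 1
  · exact ⟨b, by rw [pow_one]⟩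
  obtain ⟨x, -, hx⟩ := Nat.exists_mul_mod_eq_one_of_coprime hmn.symm (by lia : 1 < m)
  obtain ⟨y, hy⟩ : ∃ y, n * x = m * y + 1 := ⟨n * x / m, by rw [← hx, Nat.div_add_mod]⟩
  have hpow : Associated ((a ^ x) ^ m) ((b ^ y) ^ m * b) := by
    rw [← pow_mul, ← pow_mul, ← pow_succ, mul_comm x, mul_comm y, ← hy, pow_mul, pow_mul]
    exact h.pow_pow
  obtain ⟨r, hr⟩ : b ^ y ∣ a ^ x :=
    (IsIntegrallyClosed.pow_dvd_pow_iff hm).1 ((dvd_mul_right _ b).trans hpow.symm.dvd)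
  rw [hr, mul_pow] at hpow
  exact ⟨r, hpow.of_mul_left (.refl _) (pow_ne_zero _ (pow_ne_zero _ hb))⟩

lemma exists_associated_pow_div_gcd (hm : m ≠ 0) (h : Associated (a ^ m) (b ^ n)) :
    ∃ r, Associated (r ^ (m / m.gcd n)) b := by
  have hgcd : 0 < m.gcd n := Nat.gcd_pos_of_pos_left n (Nat.pos_of_ne_zero hm)
  have hroot : Associated (a ^ (m / m.gcd n)) (b ^ (n / m.gcd n)) := by
    rwa [← Associated.pow_iff hgcd.ne', ← pow_mul, ← pow_mul,
      Nat.div_mul_cancel (m.gcd_dvd_left n), Nat.div_mul_cancel (m.gcd_dvd_right n)]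
  exact exists_associated_pow_of_coprime
    (Nat.div_ne_zero_iff_of_dvd (m.gcd_dvd_left n) |>.2 ⟨hm, hgcd.ne'⟩)
    (Nat.coprime_div_gcd_div_gcd hgcd) hroot

lemma exists_associated_pow_of_not_prime_pow_dvd {p s : ℕ} (hp : p.Prime) (hn : ¬ p ^ s ∣ n)
    (h : Associated (a ^ p ^ s) (b ^ n)) : ∃ r, Associated (r ^ p) b := by
  have hps : p ^ s ≠ 0 := pow_ne_zero s hp.ne_zero
  obtain ⟨r, hr⟩ := exists_associated_pow_div_gcd hps h
  obtain ⟨t, -, ht⟩ :=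
    (Nat.dvd_prime_pow hp).1 (Nat.div_dvd_of_dvd ((p ^ s).gcd_dvd_left n))
  have ht0 : t ≠ 0 := by
    rintro rfl
    rw [pow_zero] at ht
    exact hn (Nat.eq_of_dvd_of_div_eq_one ((p ^ s).gcd_dvd_left n) ht ▸ (p ^ s).gcd_dvd_right n)
  obtain ⟨t, rfl⟩ := Nat.exists_eq_succ_of_ne_zero ht0
  exact ⟨r ^ p ^ t, by rwa [← pow_mul, ← pow_succ, ← ht]⟩

end IntegrallyClosed

section Expand

variable {R : Type*} [CommSemiring R] [NoZeroDivisors R]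

lemma associated_iff_exists_C_mul_eq {f g : R[X]} :
    Associated f g ↔ ∃ u : Rˣ, C (u : R) * f = g := by
  constructor
  · rintro ⟨v, rfl⟩
    obtain ⟨_, ⟨u, rfl⟩, hu⟩ := isUnit_iff.1 v.isUnit
    exact ⟨u, by rw [hu, mul_comm]⟩
  · rintro ⟨u, rfl⟩
    exact associated_unit_mul_right _ _ (isUnit_C.2 u.isUnit)

lemma associated_expand_iff {n : ℕ} (hn : 0 < n) {f g : R[X]} :
    Associated (expand R n f) (expand R n g) ↔ Associated f g := by
  rw [associated_iff_exists_C_mul_eq, associated_iff_exists_C_mul_eq]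
  refine exists_congr fun u ↦ ?_
  rw [← expand_inj hn (g := g), map_mul, expand_C]

end Expand

section Frobenius

variable {R : Type*} [CommSemiring R] (p : ℕ) [ExpChar R p]

lemma expand_map_frobenius (g : R[X]) : expand R p (g.map (frobenius R p)) = g ^ p := by
  rw [← map_expand, map_frobenius_expand]

lemma expand_map_iterateFrobenius (s : ℕ) (g : R[X]) :
    expand R (p ^ s) (g.map (iterateFrobenius R p s)) = g ^ p ^ s := by
  rw [← map_expand, map_iterateFrobenius_expand]

lemma exists_map_frobenius_eq_iff {f : R[X]} :
    (∃ g : R[X], g.map (frobenius R p) = f) ↔ ∀ k, ∃ c, f.coeff k = c ^ p := by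
  simpa only [mem_lifts, Set.mem_range, frobenius_def, eq_comm] using
    lifts_iff_coeff_lifts (f := frobenius R p) f

variable [NoZeroDivisors R]

lemma exists_associated_map_frobenius_iff {f : R[X]} :
    (∃ g : R[X], Associated f (g.map (frobenius R p))) ↔
      ∃ u : Rˣ, ∀ k, ∃ c, (u : R) * f.coeff k = c ^ p := by
  simp_rw [associated_iff_exists_C_mul_eq, ← coeff_C_mul, ← exists_map_frobenius_eq_iff, eq_comm]
  exact exists_comm

lemma exists_associated_map_frobenius_expand_iff {n : ℕ} (hn : 0 < n) {f : R[X]} :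
    (∃ g : R[X], Associated (expand R n f) (g.map (frobenius R p))) ↔
      ∃ g : R[X], Associated f (g.map (frobenius R p)) := by
  constructor
  · rw [exists_associated_map_frobenius_iff, exists_associated_map_frobenius_iff]
    rintro ⟨u, hu⟩
    exact ⟨u, fun k ↦ by simpa only [coeff_expand_mul hn] using hu (k * n)⟩
  · rintro ⟨g, hg⟩
    exact ⟨expand R n g, by rwa [map_expand, associated_expand_iff hn]⟩

lemma exists_associated_pow_expand_iff (s : ℕ) {f : R[X]} :
    (∃ g : R[X], Associated (g ^ p) (expand R (p ^ (s + 1)) f)) ↔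
      ∃ u : Rˣ, ∀ k, ∃ c, (u : R) * f.coeff k = c ^ p := by
  have hp : 0 < p := expChar_pos R p
  simp_rw [pow_succ', expand_mul, ← expand_map_frobenius, associated_expand_iff hp,
    Associated.comm (x := map _ _)]
  rw [exists_associated_map_frobenius_expand_iff p (pow_pos hp s),
    exists_associated_map_frobenius_iff]

end Frobenius

section PrimeFactorization

variable {R : Type*} [CommRing R] [IsDomain R] {p : ℕ} [ExpChar R p]

lemma exists_associated_pow_of_mul_eq_expand {s : ℕ} {f g h : R[X]} (hf : Prime f)
    (hgh : g * h = expand R (p ^ s) f) :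
    ∃ i ≤ p ^ s, Associated (g ^ p ^ s) (expand R (p ^ s) f ^ i) := by
  have hps : 0 < p ^ s := pow_pos (expChar_pos R p) s
  have hdvd : g.map (iterateFrobenius R p s) ∣ f ^ p ^ s := by
    refine ⟨h.map (iterateFrobenius R p s), expand_injective hps ?_⟩
    rw [map_mul, expand_map_iterateFrobenius, expand_map_iterateFrobenius, map_pow, ← hgh, mul_pow]
  obtain ⟨i, hi, hgi⟩ := (dvd_prime_pow hf _).1 hdvd
  refine ⟨i, hi, ?_⟩
  rwa [← expand_map_iterateFrobenius, ← map_pow, associated_expand_iff hps]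

lemma exists_associated_pow_expand_of_not_irreducible [IsIntegrallyClosed R] (hp : p.Prime)
    {s : ℕ} {f : R[X]} (hf : Prime f) (hred : ¬ Irreducible (expand R (p ^ s) f)) :
    ∃ r : R[X], Associated (r ^ p) (expand R (p ^ s) f) := by
  have hps : 0 < p ^ s := pow_pos hp.pos s
  have := isLocalHom_expand R hps
  have hunit : ¬ IsUnit (expand R (p ^ s) f) := fun h ↦ hf.not_isUnit h.of_map
  have hzero : expand R (p ^ s) f ≠ 0 := (expand_ne_zero hps).2 hf.ne_zero
  obtain ⟨g, h, hg, hh, hgh⟩ := (irreducible_or_factor hunit).resolve_left hred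
  obtain ⟨i, hi, hgi⟩ := exists_associated_pow_of_mul_eq_expand hf hgh.symm
  refine exists_associated_pow_of_not_prime_pow_dvd hp (fun hdvd ↦ ?_) hgi
  obtain rfl | rfl : i = 0 ∨ i = p ^ s :=
    i.eq_zero_or_pos.imp_right fun hi0 ↦ hi.antisymm (Nat.le_of_dvd hi0 hdvd)
  · rw [pow_zero, associated_one_iff_isUnit] at hgi
    exact hg ((isUnit_pow_iff hps.ne').1 hgi)
  · rw [Associated.pow_iff hps.ne'] at hgi
    exact hh (isUnit_of_associated_mul (hgh ▸ hgi.symm) (left_ne_zero_of_mul (hgh ▸ hzero)))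

end PrimeFactorization

theorem stmt13_general {Z : Type*} [CommRing Z] [IsDomain Z] [IsIntegrallyClosed Z]
    (p : ℕ) (hp : p.Prime) [CharP Z p] (f : Z[X]) (hf : Prime f) (s : ℕ) (hs : 1 ≤ s) :
    ¬ Irreducible (f.comp (X ^ p ^ s)) ↔
      ∃ u : Zˣ, ∀ k : ℕ, ∃ c : Z, (u : Z) * f.coeff k = c ^ p := by
  have : ExpChar Z p := .prime hp
  obtain ⟨t, rfl⟩ := Nat.exists_eq_add_of_le' hs
  rw [← expand_eq_comp_X_pow, ← exists_associated_pow_expand_iff p t]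
  refine ⟨exists_associated_pow_expand_of_not_irreducible hp hf, ?_⟩
  rintro ⟨g, hg⟩ hirr
  exact not_irreducible_pow hp.ne_one (hg.irreducible_iff.2 hirr)

theorem stmt13 {Z : Type*} [CommRing Z] [IsDomain Z] [UniqueFactorizationMonoid Z]
    (p : ℕ) (hp : p.Prime) [CharP Z p]
    (f : Polynomial Z) (hf : Irreducible f) (hdeg : 0 < f.natDegree)
    (s : ℕ) (hs : 1 ≤ s) :
    ¬ Irreducible (f.comp (X ^ p ^ s)) ↔
      ∃ u : Zˣ, ∀ k : ℕ, ∃ c : Z, (u : Z) * f.coeff k = c ^ p :=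
  stmt13_general p hp f hf.prime s hs
end
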